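/- arXiv:math/0212285 — 3 statements merged into one kernel-verified Lean document; each statement's English description precedes it below -/
import Mathlib

section
/- Let H be a complex Hilbert space and P : H → H a normal contraction, i.e. ‖P‖ ≤ 1 and P ∘ P* = P* ∘ P. Let Q be the strong limit of the sequence (P*)ⁿPⁿ (so (P*)ⁿPⁿ f → Q f for every f ∈ H). Then Q ∘ Q = Q. -/
/-!
Since `P` commutes with `P*`, one has `(P*)ⁿPⁿ = Aⁿ` with `A = P* P`, so `Q` is the strong limit of
the powers of `A`. By continuity of `A`, every `Q f` is a fixed point of `A`, hence of every `Aⁿ`,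
and letting `n → ∞` in `Aⁿ (Q f) = Q f` gives `Q (Q f) = Q f`.
-/

open Filter Topology ContinuousLinearMap

/-- If `P` is a normal contraction on a complex Hilbert space and `Q` is the
strong limit of `(P*)ⁿPⁿ`, then `Q ∘ Q = Q`. -/
theorem statement2 {H : Type*} [NormedAddCommGroup H] [InnerProductSpace ℂ H] [CompleteSpace H]
    (P : H →L[ℂ] H) (hP : ‖P‖ ≤ 1) (hnormal : P ∘L adjoint P = adjoint P ∘L P)
    (Q : H →L[ℂ] H)
    (hQ : ∀ f : H, Tendsto (fun n : ℕ => (((adjoint P) ^ n) ∘L (P ^ n)) f) atTop (𝓝 (Q f))) :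
    Q ∘L Q = Q := by
  have hcomm : Commute (adjoint P) P := hnormal.symm
  -- Normality turns the sequence into the powers of the single operator `P* P`.
  have hlim : ∀ f : H, Tendsto (fun n : ℕ => ((adjoint P * P) ^ n) f) atTop (𝓝 (Q f)) := by
    intro f
    have h := hQ f
    simp only [← ContinuousLinearMap.mul_def, ← hcomm.mul_pow] at h
    exact h
  ext f
  -- Shifting the index by one shows that `Q f` is a fixed point of `P* P`.
  have hfix : (adjoint P * P) (Q f) = Q f := by
    have h1 := (hlim f).comp (tendsto_add_atTop_nat 1)
    have h2 := ((adjoint P * P).continuous.tendsto (Q f)).comp (hlim f)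
    refine tendsto_nhds_unique h2 (h1.congr fun n => ?_)
    simp only [Function.comp_apply, pow_succ', mul_apply_eq_comp]
  have hpow : ∀ n : ℕ, ((adjoint P * P) ^ n) (Q f) = Q f := by
    intro n
    induction n with
    | zero => simp
    | succ n ih => rw [pow_succ, mul_apply_eq_comp, hfix, ih]
  exact tendsto_nhds_unique (hlim (Q f)) (tendsto_const_nhds.congr fun n => (hpow n).symm)
end

section
/- Let H be a complex Hilbert space and P : H → H a normal contraction, i.e. ‖P‖ ≤ 1 and P ∘ P* = P* ∘ P. Let Q be the strong limit of the sequence (P*)ⁿPⁿ. Then (P* ∘ P) ∘ Q = Q. -/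
open Filter Topology ContinuousLinearMap

/-- If `P` is a normal contraction on a complex Hilbert space and `Q` is the
strong limit of `(P*)ⁿPⁿ`, then `(P* ∘ P) ∘ Q = Q`. -/
theorem statement3 {H : Type*} [NormedAddCommGroup H] [InnerProductSpace ℂ H] [CompleteSpace H]
    (P : H →L[ℂ] H) (hP : ‖P‖ ≤ 1) (hnormal : P ∘L adjoint P = adjoint P ∘L P)
    (Q : H →L[ℂ] H)
    (hQ : ∀ f : H, Tendsto (fun n : ℕ => (((adjoint P) ^ n) ∘L (P ^ n)) f) atTop (𝓝 (Q f))) :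
    (adjoint P ∘L P) ∘L Q = Q := by
  have hc : Commute (adjoint P) P := hnormal.symm
  -- Normality turns `(P*)ⁿPⁿ` into `(P*P)ⁿ`, so applying `P*P` only shifts the sequence.
  have hpow (n : ℕ) : (adjoint P ∘L P) ∘L (((adjoint P) ^ n) ∘L (P ^ n))
      = ((adjoint P) ^ (n + 1)) ∘L (P ^ (n + 1)) := by
    change (adjoint P * P) * ((adjoint P) ^ n * P ^ n) = (adjoint P) ^ (n + 1) * P ^ (n + 1)
    rw [← hc.mul_pow, ← hc.mul_pow, pow_succ']
  ext f
  have h₁ := ((adjoint P ∘L P).continuous.tendsto (Q f)).comp (hQ f)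
  have h₂ := (hQ f).comp (tendsto_add_atTop_nat 1)
  refine tendsto_nhds_unique h₁ (h₂.congr fun n => ?_)
  exact (DFunLike.congr_fun (hpow n) f).symm
end

section
/- Let p be a prime, x ∈ ℚ_p with ‖x‖ = p³, and let α : ℚ_p → ℚ_p be the map α(g) = p³·g. Let ω be the Haar probability measure on the additive group ℚ_p supported on ℤ_p (the restriction of a Haar measure of ℚ_p to ℤ_p, normalized to total mass 1), and set μ = ((1/2)·(δ_x + δ_0)) ∗ ω. Then for every integer n ≥ 1, μ ∗ α_*μ ∗ (α²)_*μ ∗ ⋯ ∗ (α^{n−1})_*μ = μ, where α^k denotes the k-fold composition of α and α_*ν the pushforward of the measure ν under α. In particular μ ∗ α_*μ = μ. -/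
/-!
Convolving `ω` with a probability measure `ν` carried by `ℤ_p` gives back `ω`, since `ω` is
invariant under translation by every element of `ℤ_p` (`conv_eq_of_ae_norm_le_one`). By
associativity the same holds for `κ ∗ ω` in place of `ω`, in particular for
`μ = (½(δ_x + δ_0)) ∗ ω`. Now `μ` is carried by `(x + ℤ_p) ∪ ℤ_p`, hence by the ball of radius
`‖x‖ = p³` (`ae_norm_le_of_eq_conv`), and multiplication by `(p³)^k` with `k ≥ 1` maps that ball
into `ℤ_p`. So every factor `(α^k)_*μ` with `k ≥ 1` is absorbed by `μ`.
-/

open MeasureTheory Filter Topology ENNReal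

/-- The left-associated convolution product `μ ∗ α_*μ ∗ ⋯ ∗ (α^n)_*μ` (with `n + 1` factors)
on `ℚ_p`, where `α g = p³ g`, so that `(α^k) g = (p³)^k g`. -/
noncomputable def convSeq (p : ℕ) [Fact p.Prime] [MeasurableSpace ℚ_[p]]
    (μ : Measure ℚ_[p]) : ℕ → Measure ℚ_[p]
  | 0 => μ
  | n + 1 => (convSeq p μ n).conv
      (Measure.map (fun g : ℚ_[p] => ((p : ℚ_[p]) ^ 3) ^ (n + 1) * g) μ)

/-- A measure on `ℚ_p` invariant under translation by `ℤ_p` absorbs, under convolution, every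
probability measure carried by `ℤ_p`. -/
lemma conv_eq_of_ae_norm_le_one {p : ℕ} [Fact p.Prime] [MeasurableSpace ℚ_[p]] [BorelSpace ℚ_[p]]
    {ω ν : Measure ℚ_[p]} [IsProbabilityMeasure ω] [IsProbabilityMeasure ν]
    (hωinv : ∀ a : ℚ_[p], ‖a‖ ≤ 1 → Measure.map (fun g => a + g) ω = ω)
    (hν : ∀ᵐ g ∂ν, ‖g‖ ≤ 1) : ω.conv ν = ω := by
  rw [Measure.conv_comm]
  refine Measure.ext_of_lintegral _ fun f hf => ?_
  rw [Measure.lintegral_conv hf]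
  have h : ∀ᵐ a ∂ν, ∫⁻ g, f (a + g) ∂ω = ∫⁻ g, f g ∂ω := by
    filter_upwards [hν] with a ha
    conv_rhs => rw [← hωinv a ha]
    rw [lintegral_map hf (by fun_prop)]
  rw [lintegral_congr_ae h]
  simp

lemma eq_smul_map_add {p : ℕ} [Fact p.Prime] [MeasurableSpace ℚ_[p]] [BorelSpace ℚ_[p]]
    (x : ℚ_[p]) (ω : Measure ℚ_[p]) [IsProbabilityMeasure ω] :
    ((2⁻¹ : ℝ≥0∞) • (Measure.dirac x + Measure.dirac (0 : ℚ_[p]))).conv ω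
      = (2⁻¹ : ℝ≥0∞) • (Measure.map (fun g => x + g) ω + ω) := by
  rw [Measure.conv_smul_left, Measure.add_conv, Measure.dirac_conv, Measure.dirac_zero_conv]

/-- If `ω` is carried by `ℤ_p` and `‖x‖ = p³`, then `(½(δ_x + δ_0)) ∗ ω` is carried by the closed
ball of radius `p³`. -/
lemma ae_norm_le_of_eq_conv {p : ℕ} [Fact p.Prime] [MeasurableSpace ℚ_[p]] [BorelSpace ℚ_[p]]
    {x : ℚ_[p]} (hx : ‖x‖ = (p : ℝ) ^ 3) {ω μ : Measure ℚ_[p]} [IsProbabilityMeasure ω]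
    (hω : ∀ᵐ g ∂ω, ‖g‖ ≤ 1)
    (hμ : μ = ((2⁻¹ : ℝ≥0∞) • (Measure.dirac x + Measure.dirac (0 : ℚ_[p]))).conv ω) :
    ∀ᵐ g ∂μ, ‖g‖ ≤ (p : ℝ) ^ 3 := by
  have hp : (1 : ℝ) ≤ (p : ℝ) ^ 3 :=
    one_le_pow₀ (by exact_mod_cast (Fact.out : p.Prime).one_lt.le)
  rw [hμ, eq_smul_map_add]
  refine Measure.ae_smul_measure (ae_add_measure_iff.2 ⟨?_, ?_⟩) _
  · rw [ae_map_iff (by fun_prop) (measurableSet_le (by fun_prop) (by fun_prop))]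
    filter_upwards [hω] with g hg
    exact (Padic.nonarchimedean x g).trans (max_le hx.le (hg.trans hp))
  · filter_upwards [hω] with g hg using hg.trans hp

/-- Let `x ∈ ℚ_p` with `‖x‖ = p³`, `α g = p³ g`, `ω` the Haar probability
measure of `ℤ_p` viewed as a measure on `ℚ_p`, and `μ = (½(δ_x + δ_0)) ∗ ω`. Then for every
`n ≥ 1` the convolution product `μ ∗ α_*μ ∗ ⋯ ∗ (α^{n-1})_*μ` equals `μ`; in particular
`μ ∗ α_*μ = μ`. -/
theorem statement17 (p : ℕ) [Fact p.Prime]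
    [MeasurableSpace ℚ_[p]] [BorelSpace ℚ_[p]]
    (x : ℚ_[p]) (hx : ‖x‖ = (p : ℝ) ^ 3)
    (ω : Measure ℚ_[p]) (hωprob : IsProbabilityMeasure ω)
    (hωsupp : ω {g : ℚ_[p] | ‖g‖ ≤ 1} = 1)
    (hωinv : ∀ a : ℚ_[p], ‖a‖ ≤ 1 → Measure.map (fun g => a + g) ω = ω)
    (μ : Measure ℚ_[p])
    (hμ : μ = ((2⁻¹ : ℝ≥0∞) • (Measure.dirac x + Measure.dirac (0 : ℚ_[p]))).conv ω) :
    (∀ n : ℕ, 1 ≤ n → convSeq p μ (n - 1) = μ) ∧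
    μ.conv (Measure.map (fun g : ℚ_[p] => (p : ℚ_[p]) ^ 3 * g) μ) = μ := by
  have hω : ∀ᵐ g ∂ω, ‖g‖ ≤ 1 :=
    (mem_ae_iff_prob_eq_one (measurableSet_le (by fun_prop) (by fun_prop))).2 hωsupp
  have hball := ae_norm_le_of_eq_conv hx hω hμ
  have hprob : IsProbabilityMeasure μ := by
    constructor
    rw [hμ, eq_smul_map_add]
    simp [Measure.map_apply (measurable_const_add x) MeasurableSet.univ,
      ENNReal.inv_two_add_inv_two]
  have hp : (1 : ℝ) < p := by exact_mod_cast (Fact.out : p.Prime).one_lt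
  have key : ∀ k : ℕ,
      μ.conv (Measure.map (fun g : ℚ_[p] => ((p : ℚ_[p]) ^ 3) ^ (k + 1) * g) μ) = μ := by
    intro k
    have : IsProbabilityMeasure
        (Measure.map (fun g : ℚ_[p] => ((p : ℚ_[p]) ^ 3) ^ (k + 1) * g) μ) :=
      Measure.isProbabilityMeasure_map (by fun_prop)
    have hν : ∀ᵐ g ∂(Measure.map (fun g : ℚ_[p] => ((p : ℚ_[p]) ^ 3) ^ (k + 1) * g) μ),
        ‖g‖ ≤ 1 := by
      rw [ae_map_iff (by fun_prop) (measurableSet_le (by fun_prop) (by fun_prop))]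
      filter_upwards [hball] with g hg
      have h3 : (0 : ℝ) < (p : ℝ) ^ 3 := by positivity
      have hinv : ((p : ℝ) ^ 3)⁻¹ ≤ 1 := inv_le_one_of_one_le₀ (one_le_pow₀ hp.le)
      rw [norm_mul, norm_pow, norm_pow, Padic.norm_p, inv_pow]
      calc (((p : ℝ) ^ 3)⁻¹) ^ (k + 1) * ‖g‖
          ≤ ((p : ℝ) ^ 3)⁻¹ * (p : ℝ) ^ 3 := by
            gcongr
            exact pow_le_of_le_one (by positivity) hinv (Nat.succ_ne_zero k)
        _ = 1 := inv_mul_cancel₀ h3.ne'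
    conv_lhs => enter [1]; rw [hμ]
    rw [Measure.conv_assoc, conv_eq_of_ae_norm_le_one hωinv hν, ← hμ]
  have hseq : ∀ n : ℕ, convSeq p μ n = μ := by
    intro n
    induction n with
    | zero => rfl
    | succ n ih => rw [convSeq, ih, key]
  exact ⟨fun n _ => hseq (n - 1), by simpa using key 0⟩
end
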